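/- Let φ ∈ Γ₀(H) satisfy φ*(H) ⊂ (−∞,0] ∪ {+∞} and (φ*)⁻¹((−∞,0)) ≠ ∅, let s ∈ Γ₀(G) be such that S = s⁻¹((0,+∞)) ≠ ∅, let γ ∈ (0,+∞), and let (x,y) ∈ Ξ₂. Then the unique η ∈ [0,+∞) satisfying φ*( prox_{((1/γ)·s_▲(prox_{(γη)⊙s_▲} y))⊙φ*}(x/γ) ) + η = 0 equals 0, and prox_{γ(φ▷s)}(x,y) = ( x − γ·prox_{((1/γ)·s_▲(proj_{cl conv S} y))·φ*}(x/γ), proj_{cl conv S} y ). -/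

import Mathlib

open scoped Classical

noncomputable section

/-- Effective domain of an extended-real-valued function. -/
def edom {E : Type*} (f : E → EReal) : Set E := {x | f x < ⊤}

/-- Convexity of an extended-real-valued function, via its epigraph. -/
def ConvexEpi {E : Type*} [AddCommGroup E] [Module ℝ E] (f : E → EReal) : Prop :=
  Convex ℝ {p : E × ℝ | f p.1 ≤ (p.2 : EReal)}

/-- `f ∈ Γ₀(E)`: proper, lower semicontinuous, convex, with values in `(-∞, +∞]`. -/
def IsGamma0 {E : Type*} [AddCommGroup E] [Module ℝ E] [TopologicalSpace E]
    (f : E → EReal) : Prop :=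
  (∃ x, f x ≠ ⊤) ∧ (∀ x, f x ≠ ⊥) ∧ LowerSemicontinuous f ∧ ConvexEpi f

/-- Proximity operator: the (unique, for `f ∈ Γ₀`) minimizer of
`y ↦ f y + ‖x - y‖² / 2`. -/
def prox {E : Type*} [NormedAddCommGroup E] [InnerProductSpace ℝ E]
    (f : E → EReal) (x : E) : E :=
  Classical.epsilon fun p =>
    ∀ y, f p + ((‖x - p‖ ^ 2 / 2 : ℝ) : EReal) ≤ f y + ((‖x - y‖ ^ 2 / 2 : ℝ) : EReal)

/-- Metric projection onto a set. -/
def projC {E : Type*} [NormedAddCommGroup E] (C : Set E) (x : E) : E :=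
  Classical.epsilon fun p => p ∈ C ∧ ∀ y ∈ C, ‖x - p‖ ≤ ‖x - y‖

/-- Fenchel conjugate. -/
def fconj {E : Type*} [NormedAddCommGroup E] [InnerProductSpace ℝ E]
    (f : E → EReal) (y : E) : EReal :=
  ⨆ x, ((inner ℝ x y : ℝ) : EReal) - f x

/-- Plain scalar multiple `ξ·f`. -/
def smulE {E : Type*} (ξ : ℝ) (f : E → EReal) : E → EReal := fun x => (ξ : EReal) * f x

/-- The operation `ξ ⊙ f`: indicator of `cl (dom f)` if `ξ = 0`, and `ξ·f` if `ξ > 0`. -/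
def rscale {E : Type*} [TopologicalSpace E] (ξ : ℝ) (f : E → EReal) : E → EReal :=
  if ξ = 0 then fun x => if x ∈ closure (edom f) then (0 : EReal) else ⊤
  else fun x => (ξ : EReal) * f x

/-- `f^∨`: agrees with `f` where `-∞ < f < 0`, and is `+∞` elsewhere. -/
def pbas {E : Type*} (f : E → EReal) : E → EReal :=
  fun x => if ⊥ < f x ∧ f x < 0 then f x else ⊤

/-- `f^∧`: agrees with `f` where `0 < f < +∞`, and is `+∞` elsewhere. -/
def phaut {E : Type*} (f : E → EReal) : E → EReal :=
  fun x => if 0 < f x ∧ f x < ⊤ then f x else ⊤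

/-- `f_▽ = (f^∨)**`. -/
def basEnv {E : Type*} [NormedAddCommGroup E] [InnerProductSpace ℝ E]
    (f : E → EReal) : E → EReal :=
  fconj (fconj (pbas f))

/-- `f_▲ = (f^∧)**`. -/
def hautEnv {E : Type*} [NormedAddCommGroup E] [InnerProductSpace ℝ E]
    (f : E → EReal) : E → EReal :=
  fconj (fconj (phaut f))

/-- `S = s⁻¹((0, +∞))`. -/
def sdom {G : Type*} (s : G → EReal) : Set G := {v | 0 < s v ∧ s v < ⊤}

/-- The preperspective `φ ⋉ s`, on the Hilbert direct sum `H ⊕ G`. -/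
def prePersp {H G : Type*} [NormedAddCommGroup H] [InnerProductSpace ℝ H]
    [NormedAddCommGroup G] [InnerProductSpace ℝ G]
    (φ : H → EReal) (s : G → EReal) : WithLp 2 (H × G) → EReal := fun q =>
  if 0 < s ((WithLp.equiv 2 (H × G)) q).2 ∧ s ((WithLp.equiv 2 (H × G)) q).2 < ⊤ then
    s ((WithLp.equiv 2 (H × G)) q).2 *
      φ ((s ((WithLp.equiv 2 (H × G)) q).2).toReal⁻¹ • ((WithLp.equiv 2 (H × G)) q).1)
  else ⊤

/-- The perspective `φ ▷ s`: the largest lower semicontinuous convex minorant of the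
preperspective `φ ⋉ s`, on the Hilbert direct sum `H ⊕ G`. -/
def persp {H G : Type*} [NormedAddCommGroup H] [InnerProductSpace ℝ H]
    [NormedAddCommGroup G] [InnerProductSpace ℝ G]
    (φ : H → EReal) (s : G → EReal) : WithLp 2 (H × G) → EReal := fun q =>
  sSup {t : EReal | ∃ g : WithLp 2 (H × G) → EReal,
    LowerSemicontinuous g ∧ ConvexEpi g ∧ (∀ r, g r ≤ prePersp φ s r) ∧ t = g q}

/-- The point `(x, y)` in the Hilbert direct sum `H ⊕ G`. -/
def pairHG {H G : Type*} (x : H) (y : G) : WithLp 2 (H × G) :=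
  (WithLp.equiv 2 (H × G)).symm (x, y)

end
noncomputable section

/-- `Ξ₁` of Proposition 4.3. -/
def Xi1 {H G : Type*} [NormedAddCommGroup H] [InnerProductSpace ℝ H]
    [NormedAddCommGroup G] [InnerProductSpace ℝ G]
    (φ : H → EReal) (s : G → EReal) (γ : ℝ) : Set (H × G) :=
  {p | hautEnv s (projC (closure (convexHull ℝ (sdom s))) p.2) = 0 ∧
       fconj φ (projC (closure (edom (fconj φ))) (γ⁻¹ • p.1)) = 0}

/-- `Ξ₂` of Proposition 4.3. -/
def Xi2 {H G : Type*} [NormedAddCommGroup H] [InnerProductSpace ℝ H]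
    [NormedAddCommGroup G] [InnerProductSpace ℝ G]
    (φ : H → EReal) (s : G → EReal) (γ : ℝ) : Set (H × G) :=
  {p | (0 < hautEnv s (projC (closure (convexHull ℝ (sdom s))) p.2) ∧
        hautEnv s (projC (closure (convexHull ℝ (sdom s))) p.2) < ⊤) ∧
       fconj φ (prox (smulE (γ⁻¹ * (hautEnv s (projC (closure (convexHull ℝ (sdom s))) p.2)).toReal)
          (fconj φ)) (γ⁻¹ • p.1)) = 0}

/-- `Ξ₃` of Proposition 4.3. -/
def Xi3 {H G : Type*} [NormedAddCommGroup H] [InnerProductSpace ℝ H]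
    [NormedAddCommGroup G] [InnerProductSpace ℝ G]
    (φ : H → EReal) (s : G → EReal) (γ : ℝ) : Set (H × G) :=
  {p | hautEnv s (prox (smulE (γ * (-(fconj φ (projC (closure (edom (fconj φ))) (γ⁻¹ • p.1)))).toReal)
          (hautEnv s)) p.2) = 0 ∧
       fconj φ (projC (closure (edom (fconj φ))) (γ⁻¹ • p.1)) < 0}

/-- The equation (4.4) for `η` in Theorem 4.1(iii). -/
def eta9eq {H G : Type*} [NormedAddCommGroup H] [InnerProductSpace ℝ H]
    [NormedAddCommGroup G] [InnerProductSpace ℝ G]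
    (φ : H → EReal) (s : G → EReal) (γ : ℝ) (x : H) (y : G) (η : ℝ) : Prop :=
  fconj φ (prox (rscale (γ⁻¹ * (hautEnv s (prox (rscale (γ * η) (hautEnv s)) y)).toReal)
      (fconj φ)) (γ⁻¹ • x)) + (η : EReal) = 0

end

/-!
Let `C = cl conv S`, `p = proj_C y`, `τ = s_▲(p)`, let `q` be the proximal point of `(τ/γ) φ*` at
`x/γ`, and put `z = (x - γ q)/τ`, `b = (y - p)/γ`. Optimality of `q` says that `z` is a subgradient
of `φ*` at `q`, and since `φ*(q) = 0` this gives `φ**(z) ≤ ⟨q, z⟩`.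

The affine function `(u, v) ↦ ⟨q, u⟩ + ⟨b, v - p⟩` minorizes `φ ⋉ s`, because `φ*(q) = 0` and
`b` is normal to `C` at `p`. It touches `φ ▷ s` at `(τ z, p) = (x - γ q, p)`: `(z, ⟨q, z⟩)` is
in the closed convex hull of the epigraph of `φ`, `(p, τ)` is in that of the graph of `s` on
`S`, and `((z, c), (v, t)) ↦ (t z, v, t c)` is affine in each argument. Hence `(q, b)` is a
subgradient of `φ ▷ s` at `(x - γ q, p)`, and `(x, y) - (x - γ q, p) = γ (q, b)` is the
optimality condition for the proximal point.

For the scalar equation, `ξ ↦ f (prox (ξ ⊙ f) x)` is nonincreasing; using this twice, for `s_▲`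
and for `φ*`, makes the left-hand side strictly increasing in `η`.
-/

open scoped RealInnerProductSpace Topology

section Epigraph

variable {E : Type*}

/-- The real-height part of the epigraph of `f`, a subset of `E × ℝ`. It turns inequalities between
extended reals into inequalities between reals, and `ConvexEpi f` is its convexity. -/
def realEpigraph (f : E → EReal) : Set (E × ℝ) :=
  {p | f p.1 ≤ (p.2 : EReal)}

theorem coe_le_iff_forall_le_coe {a : ℝ} {c : EReal} :
    (a : EReal) ≤ c ↔ ∀ r : ℝ, c ≤ r → a ≤ r := by
  refine ⟨fun h r hr ↦ EReal.coe_le_coe_iff.1 (h.trans hr), fun h ↦ ?_⟩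
  exact EReal.le_of_forall_lt_iff_le.1 fun r hr ↦ EReal.coe_le_coe_iff.2 (h r hr.le)

theorem coe_le_add_coe_iff {a b : ℝ} {c : EReal} :
    (a : EReal) ≤ c + b ↔ ∀ r : ℝ, c ≤ r → a ≤ r + b := by
  rw [← EReal.sub_le_iff_le_add (by simp) (by simp), ← EReal.coe_sub, coe_le_iff_forall_le_coe]
  simp only [sub_le_iff_le_add]

theorem coe_mul_le_coe_iff {c : ℝ} (hc : 0 < c) {a : EReal} {r : ℝ} :
    (c : EReal) * a ≤ r ↔ a ≤ ((r / c : ℝ) : EReal) := by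
  rw [EReal.coe_div, EReal.le_div_iff_mul_le (by exact_mod_cast hc) (EReal.coe_ne_top c), mul_comm]

theorem coe_mul_ne_top (c : ℝ) {a : EReal} (htop : a ≠ ⊤) (hbot : a ≠ ⊥) :
    (c : EReal) * a ≠ ⊤ := by
  lift a to ℝ using ⟨htop, hbot⟩
  exact EReal.coe_ne_top (c * a)

theorem coe_mul_le_coe_mul_iff {c : ℝ} (hc : 0 < c) {a b : EReal} :
    (c : EReal) * a ≤ c * b ↔ a ≤ b := by
  have inv_mul (d : EReal) : ((c⁻¹ : ℝ) : EReal) * (c * d) = d := by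
    rw [← mul_assoc, ← EReal.coe_mul, inv_mul_cancel₀ hc.ne', EReal.coe_one, one_mul]
  have mono {d : ℝ} (hd : 0 < d) {a b : EReal} (h : a ≤ b) : (d : EReal) * a ≤ d * b :=
    mul_le_mul_of_nonneg_left h (by exact_mod_cast hd.le)
  exact ⟨fun h ↦ by simpa only [inv_mul] using mono (inv_pos.2 hc) h, mono hc⟩

theorem edom_eq_fst_image_realEpigraph (f : E → EReal) : edom f = Prod.fst '' realEpigraph f := by
  ext x
  constructor
  · exact fun hx ↦ ⟨(x, (f x).toReal), EReal.le_coe_toReal (ne_of_lt hx), rfl⟩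
  · rintro ⟨q, hq, rfl⟩
    exact lt_of_le_of_lt hq (EReal.coe_lt_top _)

theorem convex_edom [AddCommGroup E] [Module ℝ E] {f : E → EReal} (hf : ConvexEpi f) :
    Convex ℝ (edom f) := by
  rw [edom_eq_fst_image_realEpigraph]
  exact hf.linear_image (LinearMap.fst ℝ E ℝ)

theorem lowerSemicontinuous_iff_isClosed_realEpigraph [TopologicalSpace E] {f : E → EReal} :
    LowerSemicontinuous f ↔ IsClosed (realEpigraph f) := by
  constructor
  · intro hf
    exact hf.isClosed_epigraph.preimage (f := fun p : E × ℝ ↦ (p.1, (p.2 : EReal)))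
      (continuous_fst.prodMk (continuous_coe_real_ereal.comp continuous_snd))
  · intro hf
    rw [lowerSemicontinuous_iff_isClosed_preimage]
    intro y
    have sublevel : f ⁻¹' Set.Iic y =
        ⋂ (r : ℝ) (_ : y < r), (fun x ↦ (x, r)) ⁻¹' realEpigraph f := by
      ext x
      simp only [Set.mem_iInter]
      exact EReal.le_of_forall_lt_iff_le.symm
    rw [sublevel]
    exact isClosed_biInter fun r _ ↦ hf.preimage (by fun_prop)

theorem closure_convexHull_subset [AddCommGroup E] [Module ℝ E] [TopologicalSpace E]
    {S T : Set E} (hST : S ⊆ T) (hconv : Convex ℝ T) (hclosed : IsClosed T) :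
    closure (convexHull ℝ S) ⊆ T :=
  closure_minimal (convexHull_min hST hconv) hclosed

end Epigraph

section Scaling

variable {E : Type*} {f : E → EReal}

theorem realEpigraph_smulE {c : ℝ} (hc : 0 < c) (f : E → EReal) :
    realEpigraph (smulE c f) = Prod.map id (· / c) ⁻¹' realEpigraph f := by
  ext p
  exact coe_mul_le_coe_iff hc

theorem convexEpi_smulE [AddCommGroup E] [Module ℝ E] {c : ℝ} (hc : 0 < c) (hf : ConvexEpi f) :
    ConvexEpi (smulE c f) := by
  change Convex ℝ (realEpigraph (smulE c f))
  have hlin : (Prod.map id (· / c) : E × ℝ → E × ℝ) =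
      LinearMap.prodMap (LinearMap.id : E →ₗ[ℝ] E) (c⁻¹ • (LinearMap.id : ℝ →ₗ[ℝ] ℝ)) := by
    ext p <;> simp [div_eq_inv_mul]
  rw [realEpigraph_smulE hc, hlin]
  exact Convex.linear_preimage hf _

variable [TopologicalSpace E]

theorem rscale_of_pos {ξ : ℝ} (hξ : 0 < ξ) (f : E → EReal) : rscale ξ f = smulE ξ f :=
  if_neg hξ.ne'

theorem rscale_apply_of_ne_top (ξ : ℝ) {x : E} (hx : f x ≠ ⊤) : rscale ξ f x = ξ * f x := by
  unfold rscale
  split_ifs with hξ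
  · have hcl : x ∈ closure (edom f) := subset_closure (lt_top_iff_ne_top.2 hx)
    simp [hξ, hcl]
  · rfl

theorem realEpigraph_rscale_zero (f : E → EReal) :
    realEpigraph (rscale 0 f) = closure (edom f) ×ˢ Set.Ici 0 := by
  ext ⟨x, r⟩
  by_cases hx : x ∈ closure (edom f) <;> simp [realEpigraph, rscale, hx]

variable [AddCommGroup E] [Module ℝ E]

theorem isGamma0_smulE {c : ℝ} (hc : 0 < c) (hf : IsGamma0 f) : IsGamma0 (smulE c f) := by
  obtain ⟨⟨x, hx⟩, hbot, hlsc, hconv⟩ := hf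
  refine ⟨⟨x, coe_mul_ne_top c hx (hbot x)⟩, fun y hy ↦ ?_, ?_, convexEpi_smulE hc hconv⟩
  · refine hbot y ((coe_mul_le_coe_mul_iff hc).1 ?_ |> le_bot_iff.1)
    rw [EReal.coe_mul_bot_of_pos hc]
    exact hy.le
  · rw [lowerSemicontinuous_iff_isClosed_realEpigraph] at hlsc ⊢
    rw [realEpigraph_smulE hc]
    exact hlsc.preimage (by fun_prop)

variable [IsTopologicalAddGroup E] [ContinuousConstSMul ℝ E]

theorem isGamma0_rscale_zero (hf : IsGamma0 f) : IsGamma0 (rscale 0 f) := by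
  obtain ⟨⟨x, hx⟩, -, -, hconv⟩ := hf
  refine ⟨⟨x, ?_⟩, fun y ↦ ?_, ?_, ?_⟩
  · simp [rscale_apply_of_ne_top 0 hx]
  · by_cases hy : y ∈ closure (edom f) <;> simp [rscale, hy]
  · rw [lowerSemicontinuous_iff_isClosed_realEpigraph, realEpigraph_rscale_zero]
    exact isClosed_closure.prod isClosed_Ici
  · change Convex ℝ (realEpigraph (rscale 0 f))
    rw [realEpigraph_rscale_zero]
    exact (convex_edom hconv).closure.prod (convex_Ici 0)

theorem isGamma0_rscale {ξ : ℝ} (hξ : 0 ≤ ξ) (hf : IsGamma0 f) : IsGamma0 (rscale ξ f) := by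
  rcases hξ.eq_or_lt with rfl | hξ
  · exact isGamma0_rscale_zero hf
  · exact rscale_of_pos hξ f ▸ isGamma0_smulE hξ hf

end Scaling

section Conjugate

variable {E : Type*} [NormedAddCommGroup E] [InnerProductSpace ℝ E] {f : E → EReal}

theorem fconj_le_coe_iff {y : E} {r : ℝ} :
    fconj f y ≤ r ↔ ∀ q ∈ realEpigraph f, ⟪q.1, y⟫ - q.2 ≤ r := by
  have sub_le_iff (a : ℝ) (c : EReal) : (a : EReal) - c ≤ r ↔ ∀ ρ : ℝ, c ≤ ρ → a - ρ ≤ r := by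
    rw [EReal.sub_le_iff_le_add (by simp) (by simp), add_comm, coe_le_add_coe_iff]
    simp only [sub_le_iff_le_add']
  simp only [fconj, iSup_le_iff, sub_le_iff, Prod.forall, realEpigraph, Set.mem_ofPred_eq]

theorem convex_setOf_inner_fst_sub_snd_le (a : E) (m : ℝ) :
    Convex ℝ {p : E × ℝ | ⟪a, p.1⟫ - p.2 ≤ m} :=
  convex_halfSpace_le
    (((innerₛₗ ℝ a).comp (LinearMap.fst ℝ E ℝ) - LinearMap.snd ℝ E ℝ).isLinear) m

theorem isClosed_setOf_inner_fst_sub_snd_le (a : E) (m : ℝ) :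
    IsClosed {p : E × ℝ | ⟪a, p.1⟫ - p.2 ≤ m} :=
  isClosed_le (by fun_prop) continuous_const

theorem inner_le_of_mem_closure_convexHull {S : Set E} {a p : E} {m : ℝ}
    (hS : ∀ v ∈ S, ⟪a, v⟫ ≤ m) (hp : p ∈ closure (convexHull ℝ S)) : ⟪a, p⟫ ≤ m :=
  closure_convexHull_subset (T := {v | ⟪a, v⟫ ≤ m}) hS
    (convex_halfSpace_le (innerₛₗ ℝ a).isLinear m) (isClosed_le (by fun_prop) continuous_const) hp

theorem realEpigraph_fconj (f : E → EReal) :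
    realEpigraph (fconj f) = ⋂ q ∈ realEpigraph f, {p : E × ℝ | ⟪q.1, p.1⟫ - p.2 ≤ q.2} := by
  ext p
  simp only [Set.mem_iInter]
  exact fconj_le_coe_iff.trans (forall₂_congr fun _ _ ↦ sub_le_comm)

theorem convexEpi_fconj (f : E → EReal) : ConvexEpi (fconj f) := by
  change Convex ℝ (realEpigraph (fconj f))
  rw [realEpigraph_fconj]
  exact convex_iInter₂ fun q _ ↦ convex_setOf_inner_fst_sub_snd_le q.1 q.2

theorem lowerSemicontinuous_fconj (f : E → EReal) : LowerSemicontinuous (fconj f) := by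
  rw [lowerSemicontinuous_iff_isClosed_realEpigraph, realEpigraph_fconj]
  exact isClosed_biInter fun q _ ↦ isClosed_setOf_inner_fst_sub_snd_le q.1 q.2

theorem isGamma0_fconj {y : E} (hbot : fconj f y ≠ ⊥) (htop : fconj f y ≠ ⊤) :
    IsGamma0 (fconj f) := by
  obtain ⟨x, hx⟩ : ∃ x, f x ≠ ⊤ := by
    by_contra! h
    exact hbot (by simp [fconj, h])
  refine ⟨⟨y, htop⟩, fun u hu ↦ ?_, lowerSemicontinuous_fconj f, convexEpi_fconj f⟩
  have hlow : fconj f u ≤ ((⟪x, u⟫ - (f x).toReal - 1 : ℝ) : EReal) := hu.le.trans bot_le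
  linarith [fconj_le_coe_iff.1 hlow (x, (f x).toReal) (EReal.le_coe_toReal hx)]

theorem coe_inner_sub_le_fconj_fconj {a : E} {m : ℝ} (ha : fconj f a ≤ m) (x : E) :
    ((⟪a, x⟫ - m : ℝ) : EReal) ≤ fconj (fconj f) x :=
  coe_le_iff_forall_le_coe.2 fun _ hr ↦ fconj_le_coe_iff.1 hr (a, m) ha

theorem fconj_fconj_le (f : E → EReal) (x : E) : fconj (fconj f) x ≤ f x := by
  refine EReal.le_of_forall_lt_iff_le.1 fun r hr ↦ fconj_le_coe_iff.2 fun ⟨y, κ⟩ hy ↦ ?_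
  have young := fconj_le_coe_iff.1 hy (x, r) hr.le
  rw [real_inner_comm] at young
  linarith

theorem exists_forall_inner_add_mul_lt [CompleteSpace E] {K : Set (E × ℝ)} (hconv : Convex ℝ K)
    (hclosed : IsClosed K) {p : E × ℝ} (hp : p ∉ K) :
    ∃ (a : E) (b m : ℝ), (∀ q ∈ K, ⟪q.1, a⟫ + b * q.2 < m) ∧ m < ⟪p.1, a⟫ + b * p.2 := by
  obtain ⟨l, m, hK, hlp⟩ := geometric_hahn_banach_closed_point hconv hclosed hp
  set a := (InnerProductSpace.toDual ℝ E).symm (l.comp (ContinuousLinearMap.inl ℝ E ℝ)) with ha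
  have l_eq (q : E × ℝ) : l q = ⟪q.1, a⟫ + l (0, 1) * q.2 := by
    have split : q = (q.1, 0) + q.2 • ((0 : E), (1 : ℝ)) := by ext <;> simp
    rw [real_inner_comm, ha, InnerProductSpace.toDual_symm_apply]
    conv_lhs => rw [split, map_add, map_smul]
    simp [mul_comm]
  exact ⟨a, l (0, 1), m, fun q hq ↦ l_eq q ▸ hK q hq, l_eq p ▸ hlp⟩

theorem fconj_inv_neg_smul_le {a : E} {b m : ℝ} (hb : b < 0)
    (h : ∀ q ∈ realEpigraph f, ⟪q.1, a⟫ + b * q.2 ≤ m) :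
    fconj f ((-b)⁻¹ • a) ≤ (((-b)⁻¹ * m : ℝ) : EReal) := by
  refine fconj_le_coe_iff.2 fun q hq ↦ ?_
  rw [inner_smul_right, sub_le_iff_le_add, inv_mul_le_iff₀ (neg_pos.2 hb), mul_add,
    mul_inv_cancel_left₀ (neg_pos.2 hb).ne']
  linarith [h q hq]

theorem inner_add_mul_le_of_fconj_fconj_le {a z : E} {b m r : ℝ} (hb : b < 0)
    (h : ∀ q ∈ realEpigraph f, ⟪q.1, a⟫ + b * q.2 ≤ m) (hz : fconj (fconj f) z ≤ r) :
    ⟪z, a⟫ + b * r ≤ m := by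
  have hm := fconj_le_coe_iff.1 hz ((-b)⁻¹ • a, (-b)⁻¹ * m) (fconj_inv_neg_smul_le hb h)
  rw [inner_smul_left, conj_trivial, ← mul_sub, inv_mul_le_iff₀ (neg_pos.2 hb),
    real_inner_comm] at hm
  linarith

/-- The half-space separating `(x, f x - 1)` from the epigraph cannot be vertical, hence is the
epigraph of a continuous affine minorant. -/
theorem IsGamma0.exists_fconj_ne_top [CompleteSpace E] (hf : IsGamma0 f) :
    ∃ a, fconj f a ≠ ⊤ := by
  obtain ⟨⟨x, hx⟩, hbot, hlsc, hconv⟩ := hf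
  lift f x to ℝ using ⟨hx, hbot x⟩ with ρ hρ
  have below : (x, ρ - 1) ∉ realEpigraph f := by
    simp only [realEpigraph, Set.mem_ofPred_eq, ← hρ, EReal.coe_le_coe_iff]
    linarith
  obtain ⟨a, b, m, hepi, hxm⟩ := exists_forall_inner_add_mul_lt hconv
    (lowerSemicontinuous_iff_isClosed_realEpigraph.1 hlsc) below
  have hb : b < 0 := by linarith [hepi (x, ρ) hρ.ge]
  exact ⟨_, ne_top_of_le_ne_top (EReal.coe_ne_top _)
    (fconj_inv_neg_smul_le hb fun q hq ↦ (hepi q hq).le)⟩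

/-- Fenchel–Moreau. A separating half-space that is bounded above contains the epigraph of `f**`.
Any other one bounds a linear functional on the domain of `f`, and adding its multiples to the
affine minorant given by `hq` produces minorants that are unbounded at the separated point. -/
theorem realEpigraph_fconj_fconj_subset [CompleteSpace E] {q : E} (hq : fconj f q ≠ ⊤) :
    realEpigraph (fconj (fconj f)) ⊆ closure (convexHull ℝ (realEpigraph f)) := by
  rintro ⟨z, r⟩ hz
  by_contra hsep
  obtain ⟨a, b, m, hhull, hzm⟩ :=
    exists_forall_inner_add_mul_lt (convex_convexHull ℝ _).closure isClosed_closure hsep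
  have hepi : ∀ v ∈ realEpigraph f, ⟪v.1, a⟫ + b * v.2 < m := fun v hv ↦
    hhull v (subset_closure (subset_convexHull ℝ _ hv))
  rcases lt_or_ge b 0 with hb | hb
  · linarith [inner_add_mul_le_of_fconj_fconj_le hb (fun v hv ↦ (hepi v hv).le) hz]
  · set δ := ⟪z, a⟫ - (m - b * r) with hδ
    have hδ_pos : 0 < δ := by linarith
    have hdom : ∀ v ∈ realEpigraph f, ⟪v.1, a⟫ ≤ m - b * r := fun v hv ↦ by
      have raised : (v.1, max v.2 r) ∈ realEpigraph f :=
        le_trans hv (EReal.coe_le_coe_iff.2 (le_max_left _ _))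
      linarith [hepi _ raised, mul_le_mul_of_nonneg_left (le_max_right v.2 r) hb]
    obtain ⟨κ, hκ⟩ : ∃ κ : ℝ, fconj f q ≤ κ := ⟨_, EReal.le_coe_toReal hq⟩
    have tilted (k : ℝ) (hk : 0 ≤ k) : ⟪q, z⟫ - κ + k * δ ≤ r := by
      have hmem : fconj f (q + k • a) ≤ ((κ + k * (m - b * r) : ℝ) : EReal) := by
        refine fconj_le_coe_iff.2 fun v hv ↦ ?_
        rw [inner_add_right, inner_smul_right]
        linarith [fconj_le_coe_iff.1 hκ v hv, mul_le_mul_of_nonneg_left (hdom v hv) hk]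
      have h := fconj_le_coe_iff.1 hz (q + k • a, κ + k * (m - b * r)) hmem
      rw [inner_add_left, inner_smul_left, conj_trivial, real_inner_comm z a] at h
      rw [hδ]
      linarith
    have h := tilted (|r - (⟪q, z⟫ - κ)| / δ + 1) (by positivity)
    rw [add_mul, div_mul_cancel₀ _ hδ_pos.ne'] at h
    linarith [le_abs_self (r - (⟪q, z⟫ - κ))]

end Conjugate

section ProxPoint

variable {E : Type*} [NormedAddCommGroup E] {f : E → EReal}

/-- The function minimized by the proximity operator of `f` at `x`. -/
noncomputable def proxObjective (f : E → EReal) (x y : E) : EReal :=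
  f y + ((‖x - y‖ ^ 2 / 2 : ℝ) : EReal)

/-- `p` is a proximal point of `f` at `x`: the property that `prox f x` is chosen to satisfy. -/
def IsProxPoint (f : E → EReal) (x p : E) : Prop :=
  ∀ y, proxObjective f x p ≤ proxObjective f x y

theorem isProxPoint_iff {x p : E} {ρ : ℝ} (hp : f p = ρ) :
    IsProxPoint f x p ↔
      ∀ q ∈ realEpigraph f, ρ + ‖x - p‖ ^ 2 / 2 ≤ q.2 + ‖x - q.1‖ ^ 2 / 2 := by
  simp only [IsProxPoint, proxObjective, hp, ← EReal.coe_add, coe_le_add_coe_iff, Prod.forall,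
    realEpigraph, Set.mem_ofPred_eq]

theorem IsProxPoint.ne_top {x p v : E} (hp : IsProxPoint f x p) (hv : f v ≠ ⊤) : f p ≠ ⊤ := by
  intro htop
  have h := hp v
  rw [proxObjective, htop, EReal.top_add_coe, top_le_iff] at h
  exact EReal.add_ne_top hv (EReal.coe_ne_top _) h

theorem lowerSemicontinuous_proxObjective (hf : LowerSemicontinuous f) (x : E) :
    LowerSemicontinuous (proxObjective f x) := by
  refine hf.add' (continuous_coe_real_ereal.comp (by fun_prop)).lowerSemicontinuous fun y ↦ ?_
  exact EReal.continuousAt_add (.inr (EReal.coe_ne_bot _)) (.inr (EReal.coe_ne_top _))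

end ProxPoint

section Prox

variable {E : Type*} [NormedAddCommGroup E] [InnerProductSpace ℝ E] {f : E → EReal}

/-- `u` belongs to the Moreau subdifferential `∂f(x)`. -/
def IsSubgradientAt (f : E → EReal) (x u : E) : Prop :=
  ∀ y, f x + ((⟪u, y - x⟫ : ℝ) : EReal) ≤ f y

theorem isSubgradientAt_iff {x u : E} {ρ : ℝ} (hx : f x = ρ) :
    IsSubgradientAt f x u ↔ ∀ q ∈ realEpigraph f, ρ + ⟪u, q.1 - x⟫ ≤ q.2 := by
  simp only [IsSubgradientAt, hx, ← EReal.coe_add, coe_le_iff_forall_le_coe, Prod.forall,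
    realEpigraph, Set.mem_ofPred_eq]

theorem isProxPoint_prox_of_isProxPoint {x p : E} (hp : IsProxPoint f x p) :
    IsProxPoint f x (prox f x) :=
  Classical.epsilon_spec (p := IsProxPoint f x) ⟨p, hp⟩

theorem IsSubgradientAt.fconj_le {x u : E} {ρ : ℝ} (h : IsSubgradientAt f x u) (hx : f x = ρ) :
    fconj f u ≤ ((⟪x, u⟫ - ρ : ℝ) : EReal) := by
  refine fconj_le_coe_iff.2 fun q hq ↦ ?_
  have hsub := (isSubgradientAt_iff hx).1 h q hq
  rw [inner_sub_right, real_inner_comm q.1 u, real_inner_comm x u] at hsub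
  linarith

theorem isSubgradientAt_smulE_iff {c : ℝ} (hc : 0 < c) {x u : E} :
    IsSubgradientAt (smulE c f) x (c • u) ↔ IsSubgradientAt f x u := by
  refine forall_congr' fun y ↦ ?_
  rw [smulE, inner_smul_left, conj_trivial, EReal.coe_mul,
    ← EReal.left_distrib_of_nonneg_of_ne_top (by exact_mod_cast hc.le) (EReal.coe_ne_top c),
    smulE, coe_mul_le_coe_mul_iff hc]

theorem IsSubgradientAt.add_sq_add_sq_le {x p : E} {ρ : ℝ} (h : IsSubgradientAt f p (x - p))
    (hp : f p = ρ) {q : E × ℝ} (hq : q ∈ realEpigraph f) :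
    ρ + ‖x - p‖ ^ 2 / 2 + ‖q.1 - p‖ ^ 2 / 2 ≤ q.2 + ‖x - q.1‖ ^ 2 / 2 := by
  have hsub := (isSubgradientAt_iff hp).1 h q hq
  rw [← sub_sub_sub_cancel_right x q.1 p, norm_sub_sq_real (x - p)]
  linarith

theorem IsSubgradientAt.isProxPoint {x p : E} {ρ : ℝ} (h : IsSubgradientAt f p (x - p))
    (hp : f p = ρ) : IsProxPoint f x p :=
  (isProxPoint_iff hp).2 fun q hq ↦ by linarith [h.add_sq_add_sq_le hp hq, sq_nonneg ‖q.1 - p‖]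

theorem prox_eq_of_isSubgradientAt {x p : E} {ρ : ℝ} (hp : f p = ρ)
    (h : IsSubgradientAt f p (x - p)) : prox f x = p := by
  have hprox := isProxPoint_prox_of_isProxPoint (h.isProxPoint hp)
  have hfin := hprox.ne_top (v := p) (hp ▸ EReal.coe_ne_top ρ)
  have hepi : (prox f x, (f (prox f x)).toReal) ∈ realEpigraph f := EReal.le_coe_toReal hfin
  have hbot : f (prox f x) ≠ ⊥ := fun hbot ↦ by
    have hlow := h.add_sq_add_sq_le hp (q := (prox f x, ρ - ‖x - prox f x‖ ^ 2 / 2 - 1))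
      (by simp [realEpigraph, hbot])
    linarith [sq_nonneg ‖x - p‖, sq_nonneg ‖prox f x - p‖]
  have hle := (isProxPoint_iff (EReal.coe_toReal hfin hbot).symm).1 hprox (p, ρ) hp.le
  have hsq : ‖prox f x - p‖ ^ 2 ≤ 0 := by linarith [h.add_sq_add_sq_le hp hepi]
  exact sub_eq_zero.1 (norm_eq_zero.1 (pow_eq_zero_iff two_ne_zero |>.1
    (hsq.antisymm (sq_nonneg _))))

/-- Compare `p` with `(1 - l) • p + l • y` and let `l → 0`. -/
theorem IsProxPoint.isSubgradientAt {x p : E} {ρ : ℝ} (h : IsProxPoint f x p)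
    (hconv : ConvexEpi f) (hp : f p = ρ) : IsSubgradientAt f p (x - p) := by
  refine (isSubgradientAt_iff hp).2 fun q hq ↦ ?_
  set d := ρ + ⟪x - p, q.1 - p⟫ - q.2 with hd
  have quotient_le (l : ℝ) (hl : l ∈ Set.Ioc (0 : ℝ) 1) : d ≤ l * (‖q.1 - p‖ ^ 2 / 2) := by
    have hmin := (isProxPoint_iff hp).1 h _
      (hconv (show (p, ρ) ∈ realEpigraph f from hp.le) hq (sub_nonneg.2 hl.2) hl.1.le
        (sub_add_cancel 1 l))
    have hsub : x - ((1 - l) • p + l • q.1) = (x - p) - l • (q.1 - p) := by module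
    simp only [Prod.fst_add, Prod.smul_fst, Prod.snd_add, Prod.smul_snd, smul_eq_mul] at hmin
    rw [hsub, norm_sub_sq_real (x - p), inner_smul_right, norm_smul, mul_pow, Real.norm_eq_abs,
      sq_abs] at hmin
    refine le_of_mul_le_mul_left ?_ hl.1
    rw [hd]
    linarith
  have hlim : Filter.Tendsto (fun l : ℝ ↦ l * (‖q.1 - p‖ ^ 2 / 2)) (𝓝[>] 0) (𝓝 0) :=
    tendsto_nhdsWithin_of_tendsto_nhds
      ((continuous_id.mul continuous_const).tendsto' 0 0 (zero_mul _))
  have hd_le : d ≤ 0 := ge_of_tendsto hlim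
    (Filter.eventually_of_mem (Ioc_mem_nhdsGT one_pos) quotient_le)
  linarith

theorem exists_forall_le_of_dist_le_modulus {X : Type*} [PseudoMetricSpace X] [CompleteSpace X]
    {F : X → EReal} (hF : LowerSemicontinuous F) {μ : ℝ} (hμ : IsGLB (Set.range F) μ)
    {ω : ℝ → ℝ} (hω : Filter.Tendsto ω (𝓝[>] 0) (𝓝 0))
    (hdist : ∀ ε u v, F u ≤ ((μ + ε : ℝ) : EReal) → F v ≤ ((μ + ε : ℝ) : EReal) →
      dist u v ≤ ω ε) :
    ∃ p, ∀ v, F p ≤ F v := by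
  obtain ⟨ε, hε_anti, hε_pos, hε_lim⟩ := exists_seq_strictAnti_tendsto (0 : ℝ)
  have exists_le (n : ℕ) : ∃ u, F u ≤ ((μ + ε n : ℝ) : EReal) := by
    obtain ⟨_, ⟨u, rfl⟩, -, hu⟩ := hμ.exists_between
      (EReal.coe_lt_coe_iff.2 (lt_add_of_pos_right μ (hε_pos n)))
    exact ⟨u, hu.le⟩
  choose u hu using exists_le
  have hu_le {N n : ℕ} (hn : N ≤ n) : F (u n) ≤ ((μ + ε N : ℝ) : EReal) :=
    (hu n).trans (EReal.coe_le_coe_iff.2 (by gcongr; exact hε_anti.antitone hn))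
  have hcauchy : CauchySeq u := cauchySeq_of_le_tendsto_0 (ω ∘ ε)
    (fun n k N hn hk ↦ hdist _ _ _ (hu_le hn) (hu_le hk))
    (hω.comp (tendsto_nhdsWithin_iff.2 ⟨hε_lim, .of_forall hε_pos⟩))
  obtain ⟨p, hp⟩ := cauchySeq_tendsto_of_complete hcauchy
  have hFp (N : ℕ) : F p ≤ ((μ + ε N : ℝ) : EReal) := (hF.isClosed_preimage _).mem_of_tendsto hp
    ((Filter.eventually_ge_atTop N).mono fun n hn ↦ hu_le hn)
  have hlim : Filter.Tendsto (fun N ↦ ((μ + ε N : ℝ) : EReal)) Filter.atTop (𝓝 (μ : EReal)) := by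
    have h := (continuous_coe_real_ereal.tendsto _).comp (hε_lim.const_add μ)
    rwa [add_zero] at h
  exact ⟨p, fun v ↦ (ge_of_tendsto' hlim hFp).trans (hμ.1 ⟨v, rfl⟩)⟩

theorem IsGamma0.exists_isGLB_proxObjective [CompleteSpace E] (hf : IsGamma0 f) (x : E) :
    ∃ μ : ℝ, IsGLB (Set.range (proxObjective f x)) μ := by
  obtain ⟨a, ha⟩ := hf.exists_fconj_ne_top
  obtain ⟨v, hv⟩ := hf.1
  have hbelow (y : E) :
      ((⟪x, a⟫ - (fconj f a).toReal - ‖a‖ ^ 2 / 2 : ℝ) : EReal) ≤ proxObjective f x y := by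
    refine coe_le_add_coe_iff.2 fun r hr ↦ ?_
    have hminorant := fconj_le_coe_iff.1 (EReal.le_coe_toReal ha) (y, r) hr
    have hsq := sq_nonneg ‖(x - y) - a‖
    rw [norm_sub_sq_real (x - y), inner_sub_left] at hsq
    linarith
  have hne_bot : ⨅ y, proxObjective f x y ≠ ⊥ :=
    ne_bot_of_le_ne_bot (EReal.coe_ne_bot _) (le_iInf hbelow)
  have hne_top : ⨅ y, proxObjective f x y ≠ ⊤ :=
    ne_top_of_le_ne_top (EReal.add_ne_top hv (EReal.coe_ne_top _)) (iInf_le _ v)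
  exact ⟨_, (EReal.coe_toReal hne_top hne_bot).symm ▸ isGLB_iInf⟩

theorem dist_le_sqrt_of_proxObjective_le (hconv : ConvexEpi f) {x u v : E} {μ ε : ℝ}
    (hμ : (μ : EReal) ∈ lowerBounds (Set.range (proxObjective f x)))
    (hu : proxObjective f x u ≤ ((μ + ε : ℝ) : EReal))
    (hv : proxObjective f x v ≤ ((μ + ε : ℝ) : EReal)) :
    dist u v ≤ √(8 * ε) := by
  have height {w : E} (hw : proxObjective f x w ≤ ((μ + ε : ℝ) : EReal)) :
      (w, μ + ε - ‖x - w‖ ^ 2 / 2) ∈ realEpigraph f := by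
    change f w ≤ ((μ + ε - ‖x - w‖ ^ 2 / 2 : ℝ) : EReal)
    rw [EReal.coe_sub]
    exact (EReal.le_sub_iff_add_le (.inl (EReal.coe_ne_bot _)) (.inl (EReal.coe_ne_top _))).2 hw
  have hmid := coe_le_add_coe_iff.1 (hμ ⟨_, rfl⟩) _
    (hconv (height hu) (height hv) one_half_pos.le one_half_pos.le (add_halves 1))
  simp only [Prod.fst_add, Prod.smul_fst, Prod.snd_add, Prod.smul_snd, smul_eq_mul] at hmid
  have hcentre : x - ((1 / 2 : ℝ) • u + (1 / 2 : ℝ) • v) = (1 / 2 : ℝ) • ((x - u) + (x - v)) := by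
    module
  rw [hcentre, norm_smul, mul_pow, Real.norm_eq_abs, sq_abs] at hmid
  have hdist : dist u v = ‖(x - u) - (x - v)‖ := by
    rw [sub_sub_sub_cancel_left, dist_comm, dist_eq_norm]
  rw [hdist]
  refine Real.le_sqrt_of_sq_le ?_
  linarith [parallelogram_law_with_norm ℝ (x - u) (x - v)]

theorem IsGamma0.isProxPoint_prox [CompleteSpace E] (hf : IsGamma0 f) (x : E) :
    IsProxPoint f x (prox f x) := by
  obtain ⟨μ, hμ⟩ := hf.exists_isGLB_proxObjective x
  have hω : Filter.Tendsto (fun ε : ℝ ↦ √(8 * ε)) (𝓝[>] 0) (𝓝 0) := by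
    have hcont : Continuous fun ε : ℝ ↦ √(8 * ε) := by fun_prop
    simpa using (hcont.tendsto 0).mono_left nhdsWithin_le_nhds
  obtain ⟨p, hp⟩ := exists_forall_le_of_dist_le_modulus
    (lowerSemicontinuous_proxObjective hf.2.2.1 x) hμ hω
    fun _ _ _ hu hv ↦ dist_le_sqrt_of_proxObjective_le hf.2.2.2 hμ.1 hu hv
  exact isProxPoint_prox_of_isProxPoint (p := p) hp

theorem projC_spec [CompleteSpace E] {C : Set E} (hne : C.Nonempty) (hconv : Convex ℝ C)
    (hclosed : IsClosed C) (x : E) :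
    projC C x ∈ C ∧ ∀ v ∈ C, ⟪x - projC C x, v - projC C x⟫ ≤ 0 := by
  have hbdd : BddBelow (Set.range fun w : C ↦ ‖x - w‖) :=
    ⟨0, by rintro _ ⟨w, rfl⟩; exact norm_nonneg _⟩
  obtain ⟨p, hpC, hp⟩ := exists_norm_eq_iInf_of_complete_convex hne hclosed.isComplete hconv x
  obtain ⟨hmem, hmin⟩ : projC C x ∈ C ∧ ∀ y ∈ C, ‖x - projC C x‖ ≤ ‖x - y‖ :=
    Classical.epsilon_spec (p := fun p ↦ p ∈ C ∧ ∀ y ∈ C, ‖x - p‖ ≤ ‖x - y‖)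
      ⟨p, hpC, fun y hy ↦ hp ▸ ciInf_le hbdd ⟨y, hy⟩⟩
  have : Nonempty C := hne.to_subtype
  refine ⟨hmem, (norm_eq_iInf_iff_real_inner_le_zero hconv hmem).1 ?_⟩
  exact le_antisymm (le_ciInf fun w ↦ hmin w w.2) (ciInf_le hbdd ⟨_, hmem⟩)

end Prox

section ProxScaling

variable {E : Type*} [NormedAddCommGroup E] [InnerProductSpace ℝ E] {f : E → EReal}

theorem prox_rscale_zero [CompleteSpace E] (hne : (edom f).Nonempty) (hconv : ConvexEpi f)
    (x : E) : prox (rscale 0 f) x = projC (closure (edom f)) x := by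
  obtain ⟨hmem, hvar⟩ := projC_spec hne.closure (convex_edom hconv).closure isClosed_closure x
  have hzero : rscale 0 f (projC (closure (edom f)) x) = (0 : ℝ) := by simp [rscale, hmem]
  refine prox_eq_of_isSubgradientAt hzero ((isSubgradientAt_iff hzero).2 fun q hq ↦ ?_)
  rw [realEpigraph_rscale_zero] at hq
  linarith [hvar q.1 hq.1, Set.mem_Ici.1 hq.2]

/-- Add the two optimality inequalities, each tested at the other proximal point. -/
theorem IsGamma0.antitoneOn_apply_prox_rscale [CompleteSpace E] (hf : IsGamma0 f) (x : E) :
    AntitoneOn (fun ξ ↦ f (prox (rscale ξ f) x)) (Set.Ici 0) := by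
  intro ξ (hξ : 0 ≤ ξ) ξ' (hξ' : 0 ≤ ξ') hle
  rcases hle.eq_or_lt with rfl | hlt
  · exact le_rfl
  have hp := (isGamma0_rscale hξ hf).isProxPoint_prox x
  have hp' := (isGamma0_rscale hξ' hf).isProxPoint_prox x
  dsimp only
  generalize prox (rscale ξ f) x = p at *
  generalize prox (rscale ξ' f) x = p' at *
  by_cases hfp : f p = ⊤
  · exact hfp ▸ le_top
  have hfp' : f p' ≠ ⊤ := fun htop ↦ by
    have hξ'_pos : 0 < ξ' := hξ.trans_lt hlt
    refine hp'.ne_top (v := p) ?_ ?_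
    · rw [rscale_apply_of_ne_top _ hfp]
      exact coe_mul_ne_top ξ' hfp (hf.2.1 p)
    · rw [rscale_of_pos hξ'_pos, smulE, htop, EReal.coe_mul_top_of_pos hξ'_pos]
  have h := hp p'
  have h' := hp' p
  simp only [proxObjective, rscale_apply_of_ne_top _ hfp, rscale_apply_of_ne_top _ hfp'] at h h'
  lift f p to ℝ using ⟨hfp, hf.2.1 p⟩ with α
  lift f p' to ℝ using ⟨hfp', hf.2.1 p'⟩ with α'
  norm_cast at h h' ⊢
  have hprod : (ξ' - ξ) * α' ≤ (ξ' - ξ) * α := by linarith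
  exact le_of_mul_le_mul_left hprod (sub_pos.2 hlt)

end ProxScaling

section HautEnv

variable {G : Type*} {s : G → EReal}

/-- The graph of the restriction of `s` to `sdom s = s⁻¹((0, +∞))`, with real heights. -/
def scalingGraph (s : G → EReal) : Set (G × ℝ) :=
  (fun v ↦ (v, (s v).toReal)) '' sdom s

theorem coe_toReal_of_mem_sdom {v : G} (hv : v ∈ sdom s) : ((s v).toReal : EReal) = s v :=
  EReal.coe_toReal hv.2.ne (EReal.bot_lt_zero.trans hv.1).ne'

theorem toReal_pos_of_mem_sdom {v : G} (hv : v ∈ sdom s) : 0 < (s v).toReal :=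
  EReal.toReal_pos hv.1 hv.2.ne

theorem mem_realEpigraph_phaut_iff {q : G × ℝ} :
    q ∈ realEpigraph (phaut s) ↔ q.1 ∈ sdom s ∧ (s q.1).toReal ≤ q.2 := by
  by_cases hq : q.1 ∈ sdom s
  · simp only [hq, true_and]
    rw [← EReal.coe_le_coe_iff, coe_toReal_of_mem_sdom hq]
    exact iff_of_eq (congrArg (· ≤ (q.2 : EReal)) (if_pos hq))
  · simp only [hq, false_and, iff_false]
    exact fun h ↦ (EReal.coe_lt_top q.2).not_ge ((if_neg hq).symm.trans_le h)

variable [NormedAddCommGroup G] [InnerProductSpace ℝ G]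

theorem fconj_phaut_zero_le (s : G → EReal) : fconj (phaut s) 0 ≤ (0 : ℝ) := by
  refine fconj_le_coe_iff.2 fun q hq ↦ ?_
  obtain ⟨hS, hle⟩ := mem_realEpigraph_phaut_iff.1 hq
  rw [inner_zero_right]
  linarith [toReal_pos_of_mem_sdom hS]

theorem fconj_phaut_zero_ne_top (s : G → EReal) : fconj (phaut s) 0 ≠ ⊤ :=
  ne_top_of_le_ne_top (EReal.coe_ne_top 0) (fconj_phaut_zero_le s)

theorem hautEnv_nonneg (s : G → EReal) (v : G) : 0 ≤ hautEnv s v := by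
  simpa [hautEnv] using coe_inner_sub_le_fconj_fconj (fconj_phaut_zero_le s) v

theorem hautEnv_ne_bot (s : G → EReal) (v : G) : hautEnv s v ≠ ⊥ :=
  (EReal.bot_lt_zero.trans_le (hautEnv_nonneg s v)).ne'

theorem hautEnv_le {v : G} (hv : v ∈ sdom s) : hautEnv s v ≤ s v :=
  (fconj_fconj_le _ v).trans_eq (if_pos hv)

theorem isGamma0_hautEnv {p : G} (hp : hautEnv s p ≠ ⊤) : IsGamma0 (hautEnv s) :=
  isGamma0_fconj (hautEnv_ne_bot s p) hp

variable [CompleteSpace G]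

theorem closure_edom_hautEnv (s : G → EReal) :
    closure (edom (hautEnv s)) = closure (convexHull ℝ (sdom s)) := by
  refine Set.Subset.antisymm (closure_minimal ?_ isClosed_closure) ?_
  · have hfst : Prod.fst '' realEpigraph (phaut s) ⊆ sdom s := by
      rintro _ ⟨q, hq, rfl⟩
      exact (mem_realEpigraph_phaut_iff.1 hq).1
    calc edom (hautEnv s)
        = Prod.fst '' realEpigraph (hautEnv s) := edom_eq_fst_image_realEpigraph _
      _ ⊆ Prod.fst '' closure (convexHull ℝ (realEpigraph (phaut s))) :=
          Set.image_mono (realEpigraph_fconj_fconj_subset (fconj_phaut_zero_ne_top s))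
      _ ⊆ closure (Prod.fst '' convexHull ℝ (realEpigraph (phaut s))) :=
          image_closure_subset_closure_image continuous_fst
      _ = closure (convexHull ℝ (Prod.fst '' realEpigraph (phaut s))) :=
          congrArg closure ((LinearMap.fst ℝ G ℝ).image_convexHull _)
      _ ⊆ closure (convexHull ℝ (sdom s)) := closure_mono (convexHull_mono hfst)
  · exact closure_mono (convexHull_min (fun v hv ↦ (hautEnv_le hv).trans_lt hv.2)
      (convex_edom (convexEpi_fconj _)))

theorem sdom_nonempty_of_hautEnv_ne_top {p : G} (hp : hautEnv s p ≠ ⊤) : (sdom s).Nonempty := by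
  have hmem : p ∈ closure (edom (hautEnv s)) := subset_closure (lt_top_iff_ne_top.2 hp)
  rw [closure_edom_hautEnv] at hmem
  exact convexHull_nonempty_iff.1 (closure_nonempty_iff.1 ⟨p, hmem⟩)

theorem prox_rscale_zero_hautEnv (hS : (sdom s).Nonempty) (y : G) :
    prox (rscale 0 (hautEnv s)) y = projC (closure (convexHull ℝ (sdom s))) y := by
  rw [← closure_edom_hautEnv]
  exact prox_rscale_zero (hS.mono fun v hv ↦ (hautEnv_le hv).trans_lt hv.2) (convexEpi_fconj _) y

/-- A separating half-space that is bounded above extends to the epigraph of `s^∧`; for the others,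
each continuous affine minorant of `s^∧` gives a half-space of `G` containing `sdom s`. -/
theorem mem_closure_convexHull_scalingGraph {p : G} {τ : ℝ} (hp : hautEnv s p = τ) :
    (p, τ) ∈ closure (convexHull ℝ (scalingGraph s)) := by
  by_contra hsep
  obtain ⟨a, b, m, hhull, hpm⟩ :=
    exists_forall_inner_add_mul_lt (convex_convexHull ℝ _).closure isClosed_closure hsep
  have hgraph (v : G) (hv : v ∈ sdom s) : ⟪v, a⟫ + b * (s v).toReal ≤ m :=
    (hhull _ (subset_closure (subset_convexHull ℝ _ ⟨v, hv, rfl⟩))).le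
  rcases lt_or_ge b 0 with hb | hb
  · have hepi : ∀ q ∈ realEpigraph (phaut s), ⟪q.1, a⟫ + b * q.2 ≤ m := fun q hq ↦ by
      obtain ⟨hS, hle⟩ := mem_realEpigraph_phaut_iff.1 hq
      linarith [hgraph q.1 hS, mul_le_mul_of_nonpos_left hle hb.le]
    linarith [inner_add_mul_le_of_fconj_fconj_le hb hepi hp.le]
  have hpC : p ∈ closure (convexHull ℝ (sdom s)) :=
    closure_edom_hautEnv s ▸ subset_closure (hp.trans_lt (EReal.coe_lt_top τ))
  have hminorant {u : G} {κ : ℝ} (hu : fconj (phaut s) u ≤ κ) :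
      ⟪p, a⟫ + b * (⟪u, p⟫ - κ) ≤ m := by
    have hS : ∀ v ∈ sdom s, ⟪a + b • u, v⟫ ≤ m + b * κ := fun v hv ↦ by
      have hle := fconj_le_coe_iff.1 hu (v, (s v).toReal)
        (mem_realEpigraph_phaut_iff.2 ⟨hv, le_rfl⟩)
      rw [inner_add_left, inner_smul_left, conj_trivial, real_inner_comm, real_inner_comm v u]
      linarith [hgraph v hv, mul_le_mul_of_nonneg_left hle hb]
    have h := inner_le_of_mem_closure_convexHull hS hpC
    rw [inner_add_left, inner_smul_left, conj_trivial, real_inner_comm] at h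
    linarith
  rcases hb.eq_or_lt with rfl | hb
  · linarith [hminorant (fconj_phaut_zero_le s)]
  · have hτ : hautEnv s p ≤ ((b⁻¹ * (m - ⟪p, a⟫) : ℝ) : EReal) :=
      fconj_le_coe_iff.2 fun q hq ↦ (le_inv_mul_iff₀ hb).2 (by linarith [hminorant hq])
    rw [hp, EReal.coe_le_coe_iff, le_inv_mul_iff₀ hb] at hτ
    linarith

end HautEnv

section PerspLift

variable {H G : Type*} [NormedAddCommGroup H] [NormedSpace ℝ H] [NormedAddCommGroup G]

/-- The point `(t z, v)` of `H ⊕ G` at height `t c`. As `(z, c)` runs over the epigraph of `φ` and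
`(v, t)` over the graph of `s` on `sdom s`, it runs over the epigraph of `φ ⋉ s`. -/
def perspLift (q : H × ℝ) (w : G × ℝ) : WithLp 2 (H × G) × ℝ :=
  (pairHG (w.2 • q.1) w.1, w.2 * q.2)

theorem continuous_perspLift :
    Continuous fun a : (H × ℝ) × (G × ℝ) ↦ perspLift a.1 a.2 :=
  ((WithLp.prod_continuous_toLp 2 H G).comp (by fun_prop)).prodMk (by fun_prop)

variable [NormedSpace ℝ G]

theorem perspLift_combo_left {α β : ℝ} (h : α + β = 1) (q₁ q₂ : H × ℝ) (w : G × ℝ) :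
    perspLift (α • q₁ + β • q₂) w = α • perspLift q₁ w + β • perspLift q₂ w := by
  refine Prod.ext (congrArg (WithLp.toLp 2) (Prod.ext ?_ ?_)) ?_
  · change w.2 • (α • q₁.1 + β • q₂.1) = α • w.2 • q₁.1 + β • w.2 • q₂.1
    module
  · exact (Convex.combo_self h w.1).symm
  · change w.2 * (α * q₁.2 + β * q₂.2) = α * (w.2 * q₁.2) + β * (w.2 * q₂.2)
    ring

theorem perspLift_combo_right (α β : ℝ) (q : H × ℝ) (w₁ w₂ : G × ℝ) :
    perspLift q (α • w₁ + β • w₂) = α • perspLift q w₁ + β • perspLift q w₂ := by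
  refine Prod.ext (congrArg (WithLp.toLp 2) (Prod.ext ?_ rfl)) ?_
  · change (α * w₁.2 + β * w₂.2) • q.1 = α • w₁.2 • q.1 + β • w₂.2 • q.1
    module
  · change (α * w₁.2 + β * w₂.2) * q.2 = α * (w₁.2 * q.2) + β * (w₂.2 * q.2)
    ring

theorem perspLift_mem_of_mem_closure_convexHull {A : Set (H × ℝ)} {B : Set (G × ℝ)}
    {K : Set (WithLp 2 (H × G) × ℝ)} (hconv : Convex ℝ K) (hclosed : IsClosed K)
    (h : ∀ q ∈ A, ∀ w ∈ B, perspLift q w ∈ K) {q : H × ℝ} (hq : q ∈ closure (convexHull ℝ A))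
    {w : G × ℝ} (hw : w ∈ closure (convexHull ℝ B)) : perspLift q w ∈ K := by
  have hA : ∀ w ∈ B, perspLift q w ∈ K := fun w hw ↦ by
    refine closure_convexHull_subset (T := (perspLift · w) ⁻¹' K) (fun q hq ↦ h q hq w hw) ?_
      (hclosed.preimage (continuous_perspLift.comp (.prodMk_left w))) hq
    intro q₁ hq₁ q₂ hq₂ α β hα hβ hαβ
    rw [Set.mem_preimage, perspLift_combo_left hαβ]
    exact hconv hq₁ hq₂ hα hβ hαβ
  refine closure_convexHull_subset (T := perspLift q ⁻¹' K) hA ?_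
    (hclosed.preimage (continuous_perspLift.comp (.prodMk_right q))) hw
  intro w₁ hw₁ w₂ hw₂ α β hα hβ hαβ
  rw [Set.mem_preimage, perspLift_combo_right]
  exact hconv hw₁ hw₂ hα hβ hαβ

end PerspLift

section Persp

variable {H G : Type*} [NormedAddCommGroup H] [InnerProductSpace ℝ H]
  [NormedAddCommGroup G] [InnerProductSpace ℝ G] {φ : H → EReal} {s : G → EReal}

theorem inner_pairHG (x x' : H) (y y' : G) :
    ⟪pairHG x y, pairHG x' y'⟫ = ⟪x, x'⟫ + ⟪y, y'⟫ :=
  WithLp.prod_inner_apply _ _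

theorem realEpigraph_prePersp (φ : H → EReal) (s : G → EReal) :
    realEpigraph (prePersp φ s) = Set.image2 perspLift (realEpigraph φ) (scalingGraph s) := by
  have prePersp_of_mem {v : G} (hv : v ∈ sdom s) (z : H) :
      prePersp φ s (pairHG ((s v).toReal • z) v) = ((s v).toReal : EReal) * φ z := by
    refine (if_pos hv).trans ?_
    simp [pairHG, coe_toReal_of_mem_sdom hv, inv_smul_smul₀ (toReal_pos_of_mem_sdom hv).ne']
  ext ⟨Q, r⟩
  constructor
  · intro hQ
    by_cases hv : Q.snd ∈ sdom s
    · have hσ := toReal_pos_of_mem_sdom hv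
      have hQ_eq : pairHG ((s Q.snd).toReal • (s Q.snd).toReal⁻¹ • Q.fst) Q.snd = Q := by
        rw [smul_inv_smul₀ hσ.ne']
        rfl
      refine ⟨((s Q.snd).toReal⁻¹ • Q.fst, r / (s Q.snd).toReal), ?_, _, ⟨Q.snd, hv, rfl⟩,
        Prod.ext hQ_eq (mul_div_cancel₀ r hσ.ne')⟩
      rw [← hQ_eq] at hQ
      exact (coe_mul_le_coe_iff hσ).1 ((prePersp_of_mem hv _).symm.trans_le hQ)
    · exact absurd ((if_neg hv).symm.trans_le hQ) (EReal.coe_lt_top r).not_ge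
  · rintro ⟨⟨z, c⟩, hz, _, ⟨v, hv, rfl⟩, hQr⟩
    have hσ := toReal_pos_of_mem_sdom hv
    rw [← hQr]
    refine (prePersp_of_mem hv z).trans_le ?_
    change _ ≤ (((s v).toReal * c : ℝ) : EReal)
    rwa [coe_mul_le_coe_iff hσ, mul_div_cancel_left₀ c hσ.ne']

/-- The left-hand side is a continuous affine minorant of `φ ⋉ s`. -/
theorem coe_inner_sub_le_persp {q : H} {b : G} {m : ℝ} (hq : fconj φ q ≤ (0 : ℝ))
    (hb : ∀ v ∈ sdom s, ⟪b, v⟫ ≤ m) (Q : WithLp 2 (H × G)) :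
    ((⟪pairHG q b, Q⟫ - m : ℝ) : EReal) ≤ persp φ s Q := by
  refine le_sSup ⟨fun Q ↦ ((⟪pairHG q b, Q⟫ - m : ℝ) : EReal), ?_, ?_, fun Q ↦ ?_, rfl⟩
  · exact (continuous_coe_real_ereal.comp (by fun_prop)).lowerSemicontinuous
  · simpa only [ConvexEpi, EReal.coe_le_coe_iff, sub_le_comm] using
      convex_setOf_inner_fst_sub_snd_le (pairHG q b) m
  · refine coe_le_iff_forall_le_coe.2 fun r hr ↦ ?_
    have hQ : (Q, r) ∈ realEpigraph (prePersp φ s) := hr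
    rw [realEpigraph_prePersp] at hQ
    obtain ⟨⟨z, c⟩, hz, _, ⟨v, hv, rfl⟩, hlift⟩ := hQ
    obtain ⟨rfl, rfl⟩ := Prod.ext_iff.1 hlift
    have hzq := mul_le_mul_of_nonneg_left (fconj_le_coe_iff.1 hq (z, c) hz)
      (toReal_pos_of_mem_sdom hv).le
    rw [real_inner_comm] at hzq
    simp only [perspLift, inner_pairHG, inner_smul_right]
    linarith [hb v hv]

variable [CompleteSpace H] [CompleteSpace G]

theorem persp_le {q z : H} {p : G} {c τ : ℝ} (hq : fconj φ q ≠ ⊤) (hz : fconj (fconj φ) z ≤ c)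
    (hp : hautEnv s p = τ) : persp φ s (pairHG (τ • z) p) ≤ ((τ * c : ℝ) : EReal) := by
  refine sSup_le ?_
  rintro _ ⟨g, hg_lsc, hg_conv, hg_le, rfl⟩
  have hlift : ∀ q ∈ realEpigraph φ, ∀ w ∈ scalingGraph s, perspLift q w ∈ realEpigraph g := by
    refine Set.image2_subset_iff.1 (realEpigraph_prePersp φ s ▸ ?_)
    exact fun Q hQ ↦ (hg_le Q.1).trans hQ
  exact perspLift_mem_of_mem_closure_convexHull hg_conv
    (lowerSemicontinuous_iff_isClosed_realEpigraph.1 hg_lsc) hlift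
    (realEpigraph_fconj_fconj_subset hq (show (z, c) ∈ realEpigraph _ from hz))
    (mem_closure_convexHull_scalingGraph hp)

theorem persp_eq_mul_inner {q z : H} {b p : G} {τ : ℝ} (hq : fconj φ q ≤ (0 : ℝ))
    (hz : fconj (fconj φ) z ≤ ((⟪q, z⟫ : ℝ) : EReal)) (hp : hautEnv s p = τ)
    (hb : ∀ v ∈ sdom s, ⟪b, v⟫ ≤ ⟪b, p⟫) :
    persp φ s (pairHG (τ • z) p) = ((τ * ⟪q, z⟫ : ℝ) : EReal) := by
  refine (persp_le (ne_top_of_le_ne_top (EReal.coe_ne_top 0) hq) hz hp).antisymm ?_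
  have h := coe_inner_sub_le_persp hq hb (pairHG (τ • z) p)
  rwa [inner_pairHG, inner_smul_right, add_sub_cancel_right] at h

theorem isSubgradientAt_persp {q z : H} {b p : G} {τ : ℝ} (hq : fconj φ q ≤ (0 : ℝ))
    (hz : fconj (fconj φ) z ≤ ((⟪q, z⟫ : ℝ) : EReal)) (hp : hautEnv s p = τ)
    (hb : ∀ v ∈ sdom s, ⟪b, v⟫ ≤ ⟪b, p⟫) :
    IsSubgradientAt (persp φ s) (pairHG (τ • z) p) (pairHG q b) := by
  intro Q
  rw [persp_eq_mul_inner hq hz hp hb, ← EReal.coe_add]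
  refine (EReal.coe_le_coe_iff.2 (le_of_eq ?_)).trans (coe_inner_sub_le_persp hq hb Q)
  rw [inner_sub_right, inner_pairHG, inner_smul_right]
  ring

end Persp

section ProxPersp

variable {H G : Type*} [NormedAddCommGroup H] [InnerProductSpace ℝ H]
  [NormedAddCommGroup G] [InnerProductSpace ℝ G] {φ : H → EReal} {s : G → EReal} {γ : ℝ}

theorem prox_smulE_persp_eq [CompleteSpace H] [CompleteSpace G] {x q : H} {y p : G} {τ : ℝ}
    (hγ : 0 < γ) (hτ : 0 < τ) (hp : hautEnv s p = τ)
    (hy : ∀ v ∈ sdom s, ⟪y - p, v - p⟫ ≤ 0) (hq : fconj φ q = (0 : ℝ))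
    (hprox : IsProxPoint (smulE (γ⁻¹ * τ) (fconj φ)) (γ⁻¹ • x) q) :
    prox (smulE γ (persp φ s)) (pairHG x y) = pairHG (x - γ • q) p := by
  have ht : 0 < γ⁻¹ * τ := mul_pos (inv_pos.2 hγ) hτ
  set z := τ⁻¹ • (x - γ • q)
  set b := γ⁻¹ • (y - p) with hb
  have hx_eq : x - γ • q = τ • z := (smul_inv_smul₀ hτ.ne' _).symm
  have hz_dual : fconj (fconj φ) z ≤ ((⟪q, z⟫ : ℝ) : EReal) := by
    have hsub := hprox.isSubgradientAt (ρ := 0) (convexEpi_smulE ht (convexEpi_fconj φ))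
      (by rw [smulE, hq, EReal.coe_zero, mul_zero])
    have hdir : γ⁻¹ • x - q = (γ⁻¹ * τ) • z := by
      rw [mul_smul, ← hx_eq, smul_sub, inv_smul_smul₀ hγ.ne']
    rw [hdir, isSubgradientAt_smulE_iff ht] at hsub
    simpa using hsub.fconj_le hq
  have hb_normal : ∀ v ∈ sdom s, ⟪b, v⟫ ≤ ⟪b, p⟫ := fun v hv ↦ by
    rw [← sub_nonpos, ← inner_sub_right, hb, inner_smul_left]
    exact mul_nonpos_of_nonneg_of_nonpos (inv_pos.2 hγ).le (hy v hv)
  have hdir : pairHG x y - pairHG (τ • z) p = γ • pairHG q b := by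
    refine congrArg (WithLp.toLp 2) (Prod.ext ?_ (smul_inv_smul₀ hγ.ne' _).symm)
    change x - τ • z = γ • q
    rw [← hx_eq, sub_sub_cancel]
  rw [hx_eq]
  refine prox_eq_of_isSubgradientAt (ρ := γ * (τ * ⟪q, z⟫)) ?_ ?_
  · rw [smulE, persp_eq_mul_inner hq.le hz_dual hp hb_normal, ← EReal.coe_mul]
  · rw [hdir, isSubgradientAt_smulE_iff hγ]
    exact isSubgradientAt_persp hq.le hz_dual hp hb_normal

theorem eta9eq_zero [CompleteSpace G] {x : H} {y : G} {τ : ℝ} (hγ : 0 < γ) (hτ : 0 < τ)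
    (hp : hautEnv s (projC (closure (convexHull ℝ (sdom s))) y) = τ)
    (hq : fconj φ (prox (smulE (γ⁻¹ * τ) (fconj φ)) (γ⁻¹ • x)) = 0) :
    eta9eq φ s γ x y 0 := by
  have hS : (sdom s).Nonempty := sdom_nonempty_of_hautEnv_ne_top (hp ▸ EReal.coe_ne_top τ)
  rw [eta9eq, mul_zero, prox_rscale_zero_hautEnv hS, hp, EReal.toReal_coe,
    rscale_of_pos (mul_pos (inv_pos.2 hγ) hτ), hq, EReal.coe_zero, add_zero]

/-- The nested scaling makes the first summand of `eta9eq` nondecreasing in `η`. -/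
theorem eta9eq.eq_of_le [CompleteSpace H] [CompleteSpace G] {x : H} {y : G} {η η' : ℝ}
    (hφ : IsGamma0 (fconj φ)) (hγ : 0 < γ) (hη : 0 ≤ η) (hle : η ≤ η')
    (hfin : hautEnv s (prox (rscale (γ * η) (hautEnv s)) y) ≠ ⊤)
    (h : eta9eq φ s γ x y η) (h' : eta9eq φ s γ x y η') : η' = η := by
  refine le_antisymm ?_ hle
  have hσ_le : hautEnv s (prox (rscale (γ * η') (hautEnv s)) y) ≤
      hautEnv s (prox (rscale (γ * η) (hautEnv s)) y) :=
    (isGamma0_hautEnv hfin).antitoneOn_apply_prox_rscale y (mul_nonneg hγ.le hη)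
      (mul_nonneg hγ.le (hη.trans hle)) (by gcongr)
  have hnonneg (v : G) : 0 ≤ γ⁻¹ * (hautEnv s v).toReal :=
    mul_nonneg (inv_pos.2 hγ).le (EReal.toReal_nonneg (hautEnv_nonneg s v))
  have hscale_le : γ⁻¹ * (hautEnv s (prox (rscale (γ * η') (hautEnv s)) y)).toReal ≤
      γ⁻¹ * (hautEnv s (prox (rscale (γ * η) (hautEnv s)) y)).toReal :=
    mul_le_mul_of_nonneg_left (EReal.toReal_le_toReal hσ_le (hautEnv_ne_bot s _) hfin)
      (inv_pos.2 hγ).le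
  have hmono := hφ.antitoneOn_apply_prox_rscale (γ⁻¹ • x) (hnonneg _) (hnonneg _) hscale_le
  dsimp only at hmono
  have eq_neg {a : EReal} {t : ℝ} (ha : a + t = 0) : a = ((-t : ℝ) : EReal) := by
    induction a with
    | bot => simp at ha
    | top => simp at ha
    | coe a =>
      norm_cast at ha ⊢
      linarith
  rw [eq_neg h, eq_neg h', EReal.coe_le_coe_iff] at hmono
  exact neg_le_neg_iff.1 hmono

end ProxPersp

theorem stmt17_general {H G : Type*} [NormedAddCommGroup H] [InnerProductSpace ℝ H]
    [CompleteSpace H] [NormedAddCommGroup G] [InnerProductSpace ℝ G] [CompleteSpace G]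
    (φ : H → EReal) (s : G → EReal) {γ : ℝ} (hγ : 0 < γ) {x : H} {y : G}
    (hmem : (x, y) ∈ Xi2 φ s γ) :
    eta9eq φ s γ x y 0 ∧ (∀ η : ℝ, 0 ≤ η → eta9eq φ s γ x y η → η = 0) ∧
    prox (smulE γ (persp φ s)) (pairHG x y) =
      pairHG
        (x - γ • prox (smulE (γ⁻¹ * (hautEnv s (projC (closure (convexHull ℝ (sdom s))) y)).toReal)
          (fconj φ)) (γ⁻¹ • x))
        (projC (closure (convexHull ℝ (sdom s))) y) := by
  obtain ⟨⟨hpos, hlt⟩, hq⟩ := hmem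
  dsimp only at hpos hlt hq
  obtain ⟨τ, hp⟩ : ∃ τ : ℝ, hautEnv s (projC (closure (convexHull ℝ (sdom s))) y) = τ :=
    ⟨_, (EReal.coe_toReal hlt.ne (hautEnv_ne_bot s _)).symm⟩
  have hτ : 0 < τ := EReal.coe_pos.1 (hp ▸ hpos)
  rw [hp, EReal.toReal_coe] at hq ⊢
  have hφ : IsGamma0 (fconj φ) :=
    isGamma0_fconj (hq.trans_ne EReal.zero_ne_bot) (hq.trans_ne EReal.zero_ne_top)
  have hS : (sdom s).Nonempty := sdom_nonempty_of_hautEnv_ne_top hlt.ne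
  have hzero : eta9eq φ s γ x y 0 := eta9eq_zero hγ hτ hp hq
  refine ⟨hzero, fun η hη ↦ hzero.eq_of_le hφ hγ le_rfl hη ?_, ?_⟩
  · rw [mul_zero, prox_rscale_zero_hautEnv hS]
    exact hlt.ne
  · have hproj := projC_spec hS.convexHull.closure (convex_convexHull ℝ _).closure
      isClosed_closure y
    exact prox_smulE_persp_eq hγ hτ hp
      (fun v hv ↦ hproj.2 v (subset_closure (subset_convexHull ℝ _ hv))) hq
      ((isGamma0_smulE (mul_pos (inv_pos.2 hγ) hτ) hφ).isProxPoint_prox _)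

/-- Proposition 4.3(ii). -/
theorem stmt17 {H G : Type*} [NormedAddCommGroup H] [InnerProductSpace ℝ H] [CompleteSpace H]
    [NormedAddCommGroup G] [InnerProductSpace ℝ G] [CompleteSpace G]
    (φ : H → EReal) (s : G → EReal) (hφ : IsGamma0 φ)
    (hc1 : ∀ u : H, (⊥ < fconj φ u ∧ fconj φ u ≤ 0) ∨ fconj φ u = ⊤)
    (hc2 : ∃ u : H, ⊥ < fconj φ u ∧ fconj φ u < 0)
    (hs : IsGamma0 s)
    (hS : ∃ v : G, 0 < s v ∧ s v < ⊤)
    (γ : ℝ) (hγ : 0 < γ) (x : H) (y : G) (hmem : (x, y) ∈ Xi2 φ s γ) :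
    eta9eq φ s γ x y 0 ∧ (∀ η : ℝ, 0 ≤ η → eta9eq φ s γ x y η → η = 0) ∧
    prox (smulE γ (persp φ s)) (pairHG x y) =
      pairHG
        (x - γ • prox (smulE (γ⁻¹ * (hautEnv s (projC (closure (convexHull ℝ (sdom s))) y)).toReal)
          (fconj φ)) (γ⁻¹ • x))
        (projC (closure (convexHull ℝ (sdom s))) y) :=
  stmt17_general φ s hγ hmem
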